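/- Let x, x⊥ ∈ ℂⁿ be orthogonal unit vectors, λ ∈ [0,1), and set Z := (conj(x))(conj(x⊥))† ⊗ 1_n and f(λ) := (1−λ)^{−1/2} − 1. Then for every linear map Φ on n×n complex matrices, C(Φ ∘ Ψ_{λ,x,x⊥}^{-1}) = C(Φ) + f(λ)(Z Z† C(Φ) + C(Φ) Z Z†) + f(λ)² Z Z† C(Φ) Z Z† − (λ/(1−λ)) Z C(Φ) Z†. -/

import Mathlib

open Matrix Kronecker
open scoped ComplexOrder

noncomputable section

/-- The linear map `ρ ↦ A ρ Bᴴ`. -/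
def sandwich₂ {m n : ℕ} (A B : Matrix (Fin m) (Fin n) ℂ) :
    Matrix (Fin n) (Fin n) ℂ →ₗ[ℂ] Matrix (Fin m) (Fin m) ℂ where
  toFun ρ := A * ρ * Bᴴ
  map_add' X Y := by simp [Matrix.mul_add, Matrix.add_mul]
  map_smul' c X := by simp [Matrix.mul_smul, Matrix.smul_mul]

/-- The linear map `ρ ↦ A ρ Aᴴ`. -/
def sandwich {m n : ℕ} (A : Matrix (Fin m) (Fin n) ℂ) :
    Matrix (Fin n) (Fin n) ℂ →ₗ[ℂ] Matrix (Fin m) (Fin m) ℂ :=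
  sandwich₂ A A

/-- The Choi matrix `C(Φ) = ∑ⱼₖ Eⱼₖ ⊗ Φ(Eⱼₖ)`. -/
def Choi {n m : ℕ} (Φ : Matrix (Fin n) (Fin n) ℂ →ₗ[ℂ] Matrix (Fin m) (Fin m) ℂ) :
    Matrix (Fin n × Fin m) (Fin n × Fin m) ℂ :=
  ∑ j : Fin n, ∑ k : Fin n,
    (Matrix.single j k (1 : ℂ)) ⊗ₖ Φ (Matrix.single j k (1 : ℂ))

/-- Vectorization: `vec X = ∑ⱼ eⱼ ⊗ X eⱼ`, i.e. `(vec X) (j, i) = X i j`. -/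
def vec {m n : ℕ} (X : Matrix (Fin m) (Fin n) ℂ) : Fin n × Fin m → ℂ :=
  fun p => X p.2 p.1

/-- Complete positivity (via the Choi characterization). -/
def IsCP {n : ℕ} (Φ : Matrix (Fin n) (Fin n) ℂ →ₗ[ℂ] Matrix (Fin n) (Fin n) ℂ) : Prop :=
  (Choi Φ).PosSemidef

/-- Trace preservation. -/
def IsTP {n : ℕ} (Φ : Matrix (Fin n) (Fin n) ℂ →ₗ[ℂ] Matrix (Fin n) (Fin n) ℂ) : Prop :=
  ∀ ρ, (Φ ρ).trace = ρ.trace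

/-- Quantum channel: completely positive and trace preserving. -/
def IsChannel {n : ℕ} (Φ : Matrix (Fin n) (Fin n) ℂ →ₗ[ℂ] Matrix (Fin n) (Fin n) ℂ) : Prop :=
  IsCP Φ ∧ IsTP Φ

/-- `K_λ = 1 - (1 - √(1-λ)) x x†`. -/
def Kmat {n : ℕ} (lam : ℝ) (x : Fin n → ℂ) : Matrix (Fin n) (Fin n) ℂ :=
  1 - ((1 - Real.sqrt (1 - lam) : ℝ) : ℂ) • Matrix.vecMulVec x (star x)

/-- `L_λ = √λ y x†`. -/
def Lmat {n : ℕ} (lam : ℝ) (x y : Fin n → ℂ) : Matrix (Fin n) (Fin n) ℂ :=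
  ((Real.sqrt lam : ℝ) : ℂ) • Matrix.vecMulVec y (star x)

/-- The elementary channel `Ψ_{λ,x,y} = K_λ (·) K_λ† + L_λ (·) L_λ†`. -/
def Psi {n : ℕ} (lam : ℝ) (x y : Fin n → ℂ) :
    Matrix (Fin n) (Fin n) ℂ →ₗ[ℂ] Matrix (Fin n) (Fin n) ℂ :=
  sandwich (Kmat lam x) + sandwich (Lmat lam x y)

/-- For `λ ∈ [0,1)` and `⟨x,y⟩ = 0`, the inverse of `Ψ_{λ,x,y}`:
`Ψ_{λ,x,y}⁻¹ = K_λ⁻¹ (·) K_λ⁻¹ - (1-λ)⁻¹ L_λ (·) L_λ†`. -/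
def PsiInv {n : ℕ} (lam : ℝ) (x y : Fin n → ℂ) :
    Matrix (Fin n) (Fin n) ℂ →ₗ[ℂ] Matrix (Fin n) (Fin n) ℂ :=
  sandwich (Kmat lam x)⁻¹ - (((1 - lam)⁻¹ : ℝ) : ℂ) • sandwich (Lmat lam x y)

/-- `Φ` is conjugation by a unitary. -/
def IsUnitaryConj {n : ℕ} (Φ : Matrix (Fin n) (Fin n) ℂ →ₗ[ℂ] Matrix (Fin n) (Fin n) ℂ) : Prop :=
  ∃ U ∈ Matrix.unitaryGroup (Fin n) ℂ, ∀ ρ, Φ ρ = U * ρ * Uᴴ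

/-- A quantum channel is divisible if it factors into two channels neither of which is
a unitary conjugation. -/
def Divisible {n : ℕ} (Φ : Matrix (Fin n) (Fin n) ℂ →ₗ[ℂ] Matrix (Fin n) (Fin n) ℂ) : Prop :=
  ∃ Φ₁ Φ₂ : Matrix (Fin n) (Fin n) ℂ →ₗ[ℂ] Matrix (Fin n) (Fin n) ℂ,
    IsChannel Φ₁ ∧ IsChannel Φ₂ ∧ Φ = Φ₁ ∘ₗ Φ₂ ∧ ¬ IsUnitaryConj Φ₁ ∧ ¬ IsUnitaryConj Φ₂

/-- `Z = conj(x) conj(x⊥)† ⊗ 1`. -/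
def Zmat {n : ℕ} (x xp : Fin n → ℂ) : Matrix (Fin n × Fin n) (Fin n × Fin n) ℂ :=
  (Matrix.vecMulVec (star x) xp) ⊗ₖ (1 : Matrix (Fin n) (Fin n) ℂ)

/-- Entries of the Choi matrix. -/
theorem Choi_apply {n m : ℕ}
    (Φ : Matrix (Fin n) (Fin n) ℂ →ₗ[ℂ] Matrix (Fin m) (Fin m) ℂ) (p q : Fin n × Fin m) :
    Choi Φ p q = Φ (Matrix.single p.1 q.1 1) p.2 q.2 := by
  simp only [Choi, Matrix.sum_apply, Matrix.kroneckerMap_apply]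
  rw [Finset.sum_eq_single p.1, Finset.sum_eq_single q.1]
  · simp
  · intro b _ hb
    simp [hb]
  · simp
  · intro b _ hb
    simp [hb]
  · simp

/-- Precomposition with `ρ ↦ A ρ Bᴴ` sandwiches the Choi matrix by `Aᵀ ⊗ 1` and `Bᵀ ⊗ 1`. -/
theorem Choi_comp_sandwich₂ {n m k : ℕ}
    (Φ : Matrix (Fin n) (Fin n) ℂ →ₗ[ℂ] Matrix (Fin m) (Fin m) ℂ)
    (A B : Matrix (Fin n) (Fin k) ℂ) :
    Choi (Φ ∘ₗ sandwich₂ A B) =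
      (Aᵀ ⊗ₖ (1 : Matrix (Fin m) (Fin m) ℂ)) * Choi Φ *
        (Bᵀ ⊗ₖ (1 : Matrix (Fin m) (Fin m) ℂ))ᴴ := by
  ext ⟨j, a⟩ ⟨l, b⟩
  have hsum : A * Matrix.single j l (1 : ℂ) * Bᴴ =
      ∑ s, ∑ t, (A s j * star (B t l)) • Matrix.single s t (1 : ℂ) := by
    rw [Matrix.matrix_eq_sum_single (A * Matrix.single j l (1 : ℂ) * Bᴴ)]
    refine Finset.sum_congr rfl fun s _ => Finset.sum_congr rfl fun t _ => ?_
    rw [Matrix.smul_single, smul_eq_mul, mul_one]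
    congr 1
    simp [Matrix.mul_apply, Matrix.single_apply, ite_and]
  have hΦ : Choi (Φ ∘ₗ sandwich₂ A B) (j, a) (l, b) =
      ∑ s, ∑ t, A s j * star (B t l) * Φ (Matrix.single s t 1) a b := by
    rw [Choi_apply]
    change Φ (A * Matrix.single j l (1 : ℂ) * Bᴴ) a b = _
    rw [hsum]
    simp only [map_sum, map_smul, Matrix.sum_apply, Matrix.smul_apply, smul_eq_mul]
  rw [hΦ, Finset.sum_comm]
  simp only [Matrix.mul_apply, Fintype.sum_prod_type, Choi_apply, Matrix.kroneckerMap_apply,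
    Matrix.conjTranspose_apply, Matrix.transpose_apply, Matrix.one_apply, star_mul']
  simp [Finset.sum_mul, mul_right_comm]

theorem Choi_comp_sub_smul {n m k : ℕ}
    (Φ : Matrix (Fin n) (Fin n) ℂ →ₗ[ℂ] Matrix (Fin m) (Fin m) ℂ) (c : ℂ)
    (Λ₁ Λ₂ : Matrix (Fin k) (Fin k) ℂ →ₗ[ℂ] Matrix (Fin n) (Fin n) ℂ) :
    Choi (Φ ∘ₗ (Λ₁ - c • Λ₂)) = Choi (Φ ∘ₗ Λ₁) - c • Choi (Φ ∘ₗ Λ₂) := by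
  ext p q
  simp [Choi_apply]

theorem Kmat_inv {n : ℕ} {lam : ℝ} {x : Fin n → ℂ} (hx : star x ⬝ᵥ x = 1) (hlam : lam < 1) :
    (Kmat lam x)⁻¹ =
      1 + (((Real.sqrt (1 - lam))⁻¹ - 1 : ℝ) : ℂ) • Matrix.vecMulVec x (star x) := by
  have hs : ((Real.sqrt (1 - lam) : ℝ) : ℂ) ≠ 0 := by
    exact_mod_cast (Real.sqrt_pos.2 (sub_pos.2 hlam)).ne'
  apply Matrix.inv_eq_right_inv
  have hP : Matrix.vecMulVec x (star x) * Matrix.vecMulVec x (star x) =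
      Matrix.vecMulVec x (star x) := by
    rw [Matrix.vecMulVec_mul_vecMulVec, hx, one_smul]
  simp only [Kmat, sub_mul, mul_add, one_mul, mul_one, smul_mul_assoc, mul_smul_comm, hP]
  push_cast
  match_scalars
  · simp
  · field_simp
    ring

theorem Zmat_mul_conjTranspose {n : ℕ} (x : Fin n → ℂ) {xp : Fin n → ℂ}
    (hxp : star xp ⬝ᵥ xp = 1) :
    Zmat x xp * (Zmat x xp)ᴴ =
      Matrix.vecMulVec (star x) x ⊗ₖ (1 : Matrix (Fin n) (Fin n) ℂ) := by
  rw [Zmat, Matrix.conjTranspose_kronecker, ← Matrix.mul_kronecker_mul,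
    Matrix.conjTranspose_vecMulVec, Matrix.vecMulVec_mul_vecMulVec, dotProduct_comm, hxp]
  simp

/-- expansion of `C(Φ ∘ Ψ_λ⁻¹)` in terms of `Z = conj(x) conj(x⊥)† ⊗ 1` and
`f(λ) = (1-λ)^{-1/2} - 1`. -/
theorem choi_comp_PsiInv_expansion (n : ℕ) (x xp : Fin n → ℂ)
    (hx : star x ⬝ᵥ x = 1) (hxp : star xp ⬝ᵥ xp = 1) (horth : star x ⬝ᵥ xp = 0)
    (lam : ℝ) (hlam : lam ∈ Set.Ico (0 : ℝ) 1)
    (Φ : Matrix (Fin n) (Fin n) ℂ →ₗ[ℂ] Matrix (Fin n) (Fin n) ℂ) :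
    Choi (Φ ∘ₗ PsiInv lam x xp) =
      Choi Φ
      + (((Real.sqrt (1 - lam))⁻¹ - 1 : ℝ) : ℂ) •
          (Zmat x xp * (Zmat x xp)ᴴ * Choi Φ + Choi Φ * (Zmat x xp * (Zmat x xp)ᴴ))
      + ((((Real.sqrt (1 - lam))⁻¹ - 1) ^ 2 : ℝ) : ℂ) •
          (Zmat x xp * (Zmat x xp)ᴴ * Choi Φ * (Zmat x xp * (Zmat x xp)ᴴ))
      - ((lam / (1 - lam) : ℝ) : ℂ) • (Zmat x xp * Choi Φ * (Zmat x xp)ᴴ) := by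
  obtain ⟨h0, h1⟩ := hlam
  have hK : ((Kmat lam x)⁻¹ᵀ ⊗ₖ (1 : Matrix (Fin n) (Fin n) ℂ)) =
      1 + (((Real.sqrt (1 - lam))⁻¹ - 1 : ℝ) : ℂ) • (Zmat x xp * (Zmat x xp)ᴴ) := by
    rw [Kmat_inv hx h1, Zmat_mul_conjTranspose x hxp, Matrix.transpose_add, Matrix.transpose_smul,
      Matrix.transpose_vecMulVec, Matrix.transpose_one, Matrix.add_kronecker,
      Matrix.smul_kronecker, Matrix.one_kronecker_one]
  have hL : ((Lmat lam x xp)ᵀ ⊗ₖ (1 : Matrix (Fin n) (Fin n) ℂ)) =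
      ((Real.sqrt lam : ℝ) : ℂ) • Zmat x xp := by
    rw [Lmat, Matrix.transpose_smul, Matrix.transpose_vecMulVec, Matrix.smul_kronecker, Zmat]
  have hlam' : (((1 - lam)⁻¹ : ℝ) : ℂ) * (((Real.sqrt lam : ℝ) : ℂ) * ((Real.sqrt lam : ℝ) : ℂ)) =
      ((lam / (1 - lam) : ℝ) : ℂ) := by
    rw [← Complex.ofReal_mul, Real.mul_self_sqrt h0, ← Complex.ofReal_mul, div_eq_inv_mul]
  rw [PsiInv, Choi_comp_sub_smul, sandwich, sandwich, Choi_comp_sandwich₂, Choi_comp_sandwich₂,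
    hK, hL, ← hlam', Complex.ofReal_pow]
  simp only [Matrix.conjTranspose_add, Matrix.conjTranspose_smul, Matrix.conjTranspose_one,
    Matrix.conjTranspose_mul, Matrix.conjTranspose_conjTranspose, Complex.star_def,
    Complex.conj_ofReal, add_mul, mul_add, one_mul, mul_one, smul_mul_assoc, mul_smul_comm,
    smul_smul]
  module

end
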